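/- Let K be a field and q ∈ K^× not a root of unity. The algebra of quantum matrices R_q[M_{m×n}] is a symmetric quantum nilpotent algebra of dimension N = mn with respect to the presentation x_{(i−1)n+j} = t_{ij} and the action of the torus H = (K^×)^{m+n} given by (ξ_1, …, ξ_{m+n}) · t_{ij} = ξ_i ξ_{m+j}^{−1} t_{ij}; in particular each δ_k is locally nilpotent, and the elements h_{ij} := (1, …, 1, q^{−1}, 1, …, 1, q, 1, …, 1) ∈ H (with q^{−1} in position i and q in position m+j) satisfy σ_{(i−1)n+j} = (h_{ij} ·) and h_{ij} · t_{ij} = q^{−2} t_{ij}. -/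

import Mathlib

open scoped BigOperators

noncomputable section

universe u v

/-- The group of `K`-points of a split torus of rank `r`. -/
abbrev Torus (K : Type u) [Field K] (r : ℕ) : Type u := Fin r → Kˣ

section Core

variable (K : Type u) [Field K] {R : Type v} [Ring R] [Algebra K R] {r N : ℕ}

/-- `a` is an eigenvector of the torus action `act` with (integral) character `f`. -/
def IsEigenWith (act : Torus K r →* (R ≃ₐ[K] R)) (f : Fin r → ℤ) (a : R) : Prop :=
  ∀ ξ : Torus K r, act ξ a = ((∏ i, ξ i ^ f i : Kˣ) : K) • a

/-- The torus action `act` is rational: every element is a finite sum of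
eigenvectors whose eigenvalues are given by integral characters of the torus. -/
def IsRationalAction (act : Torus K r →* (R ≃ₐ[K] R)) : Prop :=
  ∀ a : R, ∃ (s : Finset (Fin r → ℤ)) (c : (Fin r → ℤ) → R),
    a = ∑ f ∈ s, c f ∧ ∀ f ∈ s, IsEigenWith K act f (c f)

/-- The ordered monomial `x 0 ^ m 0 * x 1 ^ m 1 * ⋯ * x (N-1) ^ m (N-1)`. -/
def ordMonomial (x : Fin N → R) (m : Fin N → ℕ) : R :=
  ((List.finRange N).map fun k => x k ^ m k).prod

/-- The ordered monomial in the reversed order of the generators. -/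
def revOrdMonomial (x : Fin N → R) (m : Fin N → ℕ) : R :=
  ((List.finRange N).reverse.map fun k => x k ^ m k).prod

/-- The subalgebra generated by the first `m` of the elements `x 0, …, x (N-1)`. -/
def Rsub (x : Fin N → R) (m : ℕ) : Subalgebra K R :=
  Algebra.adjoin K (x '' {l : Fin N | (l : ℕ) < m})

/-- The subalgebra generated by the elements `x l` with `m < l` (for the reversed order). -/
def RsubRev (x : Fin N → R) (m : ℕ) : Subalgebra K R :=
  Algebra.adjoin K (x '' {l : Fin N | m < (l : ℕ)})

/-- The skew derivation `δ_k : a ↦ x_k a − (h_k · a) x_k` attached to the `k`-th generator. -/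
def skewDelta (act : Torus K r →* (R ≃ₐ[K] R)) (x : Fin N → R) (h : Fin N → Torus K r)
    (k : Fin N) : R → R :=
  fun a => x k * a - act (h k) a * x k

end Core

/-- A quantum nilpotent algebra (CGL extension) of dimension `N`:  an iterated skew
polynomial extension `R = K[x_1][x_2; σ_2, δ_2]⋯[x_N; σ_N, δ_N]` equipped with a rational
action of a torus `H = (Kˣ)^r` by `K`-algebra automorphisms such that the `x_k` are
`H`-eigenvectors, each `δ_k` is a locally nilpotent `σ_k`-derivation of the subalgebra
generated by `x_1, …, x_{k-1}`, and each `σ_k` is given by the action of a torus element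
`h_k` whose eigenvalue `λ_k` on `x_k` is not a root of unity.  The iterated skew polynomial
presentation is encoded by the generation, linear independence of ordered monomials
(PBW basis) and the skew commutation conditions. -/
structure QNA (K : Type u) [Field K] (R : Type v) [Ring R] [Algebra K R] (N r : ℕ) where
  x : Fin N → R
  act : Torus K r →* (R ≃ₐ[K] R)
  h : Fin N → Torus K r
  lam : Fin N → K
  rational : IsRationalAction K act
  gen : Algebra.adjoin K (Set.range x) = ⊤
  pbw : LinearIndependent K (ordMonomial (R := R) x)
  eigenvec : ∀ k : Fin N, ∃ f : Fin r → ℤ, IsEigenWith K act f (x k)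
  stable : ∀ k : Fin N, ∀ a ∈ Rsub K x (k : ℕ), skewDelta K act x h k a ∈ Rsub K x (k : ℕ)
  locnil : ∀ k : Fin N, ∀ a ∈ Rsub K x (k : ℕ), ∃ n : ℕ, (skewDelta K act x h k)^[n] a = 0
  hx : ∀ k, act (h k) (x k) = lam k • x k
  lam_not_root : ∀ k, ∀ n : ℕ, n ≠ 0 → lam k ^ n ≠ 1

/-- A symmetric quantum nilpotent algebra: a quantum nilpotent algebra which admits an
iterated skew polynomial presentation, satisfying the same axioms, also for the reversed
order `x_N, x_{N-1}, …, x_1` of the generators, with respect to torus elements `h*_k`. -/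
structure SymQNA (K : Type u) [Field K] (R : Type v) [Ring R] [Algebra K R] (N r : ℕ)
    extends QNA K R N r where
  hstar : Fin N → Torus K r
  lamstar : Fin N → K
  pbwRev : LinearIndependent K (revOrdMonomial (R := R) x)
  stableRev : ∀ k : Fin N, ∀ a ∈ RsubRev K x (k : ℕ),
    skewDelta K act x hstar k a ∈ RsubRev K x (k : ℕ)
  locnilRev : ∀ k : Fin N, ∀ a ∈ RsubRev K x (k : ℕ),
    ∃ n : ℕ, (skewDelta K act x hstar k)^[n] a = 0
  hxstar : ∀ k, act (hstar k) (x k) = lamstar k • x k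
  lamstar_not_root : ∀ k, ∀ n : ℕ, n ≠ 0 → lamstar k ^ n ≠ 1

section Prime

variable (K : Type u) [Field K] {R : Type v} [Ring R] [Algebra K R] {r N : ℕ}

/-- The skew derivation `δ_k` of the `k`-th step of the presentation vanishes. -/
def deltaZero (Q : QNA K R N r) (k : Fin N) : Prop :=
  ∀ a ∈ Rsub K Q.x (k : ℕ), skewDelta K Q.act Q.x Q.h k a = 0

/-- `p` is a prime element of the subalgebra `A`:  `p` is a nonzero noninvertible normal
element of `A` (`pA = Ap`) such that `A/Ap` is a domain. -/
def IsPrimeIn (A : Subalgebra K R) (p : R) : Prop :=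
  p ∈ A ∧ p ≠ 0 ∧ (¬ ∃ u ∈ A, p * u = 1 ∧ u * p = 1) ∧
  (∀ a ∈ A, ∃ b ∈ A, a * p = p * b) ∧
  (∀ a ∈ A, ∃ b ∈ A, p * a = b * p) ∧
  (∀ a ∈ A, ∀ b ∈ A, (∃ d ∈ A, a * b = p * d) → (∃ d ∈ A, a = p * d) ∨ (∃ d ∈ A, b = p * d))

/-- The predecessor function of the level sets of `η`:  `p(k)` is the largest `l < k`
with `η l = η k`, and `⊥` (i.e. `−∞`) if there is no such `l`. -/
def predIdx {α : Type*} [DecidableEq α] (η : Fin N → α) (k : Fin N) : WithBot (Fin N) :=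
  (Finset.univ.filter fun l => l < k ∧ η l = η k).max

/-- The successor function of the level sets of `η`:  `s(k)` is the smallest `l > k`
with `η l = η k`, and `⊤` (i.e. `+∞`) if there is no such `l`. -/
def succIdx {α : Type*} [DecidableEq α] (η : Fin N → α) (k : Fin N) : WithTop (Fin N) :=
  (Finset.univ.filter fun l => k < l ∧ η l = η k).min

/-- `(η, c, y)` is a sequence of homogeneous prime elements for the quantum nilpotent
algebra `Q` in the sense of the prime element theorem:  `y` is defined by the recursion
`y_k = y_{p(k)} x_k − c_k` (if `δ_k ≠ 0`; `y_k = x_k` if `δ_k = 0`), the `y_k` are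
`H`-eigenvectors, and for every `k` the homogeneous prime elements of the subalgebra
`R_k` generated by `x_1, …, x_k` are precisely the nonzero scalar multiples of the
`y_l` with `l ≤ k` and `s(l) > k`. -/
structure IsPrimeSeq (Q : QNA K R N r) (η : Fin N → ℤ) (c : Fin N → R) (y : Fin N → R) :
    Prop where
  c_mem : ∀ k : Fin N, ¬ deltaZero K Q k → c k ∈ Rsub K Q.x (k : ℕ)
  rec_delta_zero : ∀ k : Fin N, deltaZero K Q k → y k = Q.x k
  rec_delta_ne : ∀ k : Fin N, ¬ deltaZero K Q k →
    y k = (WithBot.recBotCoe (1 : R) (fun l => y l) (predIdx η k)) * Q.x k - c k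
  homog : ∀ k : Fin N, ∃ f : Fin r → ℤ, IsEigenWith K Q.act f (y k)
  prime_iff : ∀ k : Fin N, ∀ u : R,
    (IsPrimeIn K (Rsub K Q.x ((k : ℕ) + 1)) u ∧ ∃ f : Fin r → ℤ, IsEigenWith K Q.act f u) ↔
    (∃ l : Fin N, l ≤ k ∧ (∀ l' : Fin N, l < l' → l' ≤ k → η l' ≠ η l) ∧
      ∃ t : Kˣ, u = (t : K) • y l)

/-- The vector `ē_k = e_k + e_{p(k)} + e_{p²(k)} + ⋯ ∈ ℤ^N`. -/
def ebar (η : Fin N → ℤ) (k : Fin N) : Fin N → ℤ :=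
  fun l => if l ≤ k ∧ η l = η k then 1 else 0

/-- The multiplicatively skewsymmetric matrix of eigenvalues:  `1` on the diagonal,
`λ_{kl}` below it and `λ_{lk}⁻¹` above it. -/
def omegaEntry (lam2 : Fin N → Fin N → Kˣ) (k l : Fin N) : Kˣ :=
  if k = l then 1 else if l < k then lam2 k l else (lam2 l k)⁻¹

/-- The unique group bicharacter `Ω : ℤ^N × ℤ^N → Kˣ` with `Ω(e_k, e_l)` equal to `1`,
`λ_{kl}`, `λ_{lk}⁻¹` according as `k = l`, `k > l`, `k < l`. -/
def Omega (lam2 : Fin N → Fin N → Kˣ) (f g : Fin N → ℤ) : Kˣ :=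
  ∏ k, ∏ l, (omegaEntry K lam2 k l) ^ (f k * g l)

/-- The set of exchangeable indices: those `k` with `s(k) ≠ +∞`. -/
def exSet (η : Fin N → ℤ) : Finset (Fin N) :=
  Finset.univ.filter fun k => ∃ l, k < l ∧ η l = η k

/-- Condition (A): `K` contains square roots of the scalars `λ_{kl}` such that the
subgroup of `Kˣ` generated by all of them contains no elements of order 2. -/
def CondA (lam2 : Fin N → Fin N → Kˣ) : Prop :=
  ∃ sq : Fin N → Fin N → Kˣ, (∀ k l : Fin N, l < k → sq k l ^ 2 = lam2 k l) ∧
    ∀ g ∈ Subgroup.closure {u : Kˣ | ∃ k l : Fin N, l < k ∧ u = sq k l}, g ^ 2 = 1 → g = 1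

/-- Condition (B): there exist positive integers `d_n`, `n ∈ range η`, such that
`(λ*_k)^{d_{η(l)}} = (λ*_l)^{d_{η(k)}}` for all exchangeable `k, l`. -/
def CondB (η : Fin N → ℤ) (lamstar : Fin N → K) : Prop :=
  ∃ d : ℤ → ℕ, (∀ n ∈ Set.range η, 0 < d n) ∧
    ∀ k ∈ exSet η, ∀ l ∈ exSet η, lamstar k ^ d (η l) = lamstar l ^ d (η k)

/-- The defining conditions for the exchange matrix `B̃ ∈ M_{N×ex}(ℤ)`:  columns indexed
outside `ex` vanish; `Ω(Σ_l b_{lk} ē_l, ē_n)` equals `λ*_n` for `k = n` and `1` otherwise;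
and the products `y_1^{b_{1k}} ⋯ y_N^{b_{Nk}}` are fixed under `H`, i.e. the characters
`χ_{y_l}` of the `y_l` satisfy `Σ_l b_{lk} χ_{y_l} = 0`. -/
def IsExchangeMatrix (lam2 : Fin N → Fin N → Kˣ) (η : Fin N → ℤ) (lamstar : Fin N → K)
    (chiy : Fin N → Fin r → ℤ) (B : Fin N → Fin N → ℤ) : Prop :=
  (∀ k : Fin N, k ∉ exSet η → ∀ l, B l k = 0) ∧
  (∀ k ∈ exSet η, ∀ n : Fin N,
    ((Omega K lam2 (fun j => ∑ l, B l k * ebar η l j) (ebar η n) : Kˣ) : K) =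
      (if k = n then lamstar n else 1)) ∧
  (∀ k ∈ exSet η, ∀ i : Fin r, (∑ l, B l k * chiy l i) = 0)

/-- `ι : R →ₐ[K] D` realizes the division ring `D` as the division ring of fractions
`Fract R`:  `ι` is injective and every element of `D` is a right fraction `ι(a) ι(b)⁻¹`. -/
def IsFractionEmb {D : Type v} [DivisionRing D] [Algebra K D] (ι : R →ₐ[K] D) : Prop :=
  Function.Injective ι ∧ ∀ d : D, ∃ a b : R, b ≠ 0 ∧ d * ι b = ι a

end Prime
section QMat

variable (K : Type u) [Field K] (q : Kˣ) (m n : ℕ)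

/-- The defining relations of the algebra of quantum matrices `R_q[M_{m×n}]`. -/
inductive qMatRel : FreeAlgebra K (Fin m × Fin n) → FreeAlgebra K (Fin m × Fin n) → Prop
  | col : ∀ (i k : Fin m) (j : Fin n), i < k →
      qMatRel (FreeAlgebra.ι K (i, j) * FreeAlgebra.ι K (k, j))
        ((q : K) • (FreeAlgebra.ι K (k, j) * FreeAlgebra.ι K (i, j)))
  | row : ∀ (i : Fin m) (j l : Fin n), j < l →
      qMatRel (FreeAlgebra.ι K (i, j) * FreeAlgebra.ι K (i, l))
        ((q : K) • (FreeAlgebra.ι K (i, l) * FreeAlgebra.ι K (i, j)))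
  | comm : ∀ (i k : Fin m) (j l : Fin n), i < k → l < j →
      qMatRel (FreeAlgebra.ι K (i, j) * FreeAlgebra.ι K (k, l))
        (FreeAlgebra.ι K (k, l) * FreeAlgebra.ι K (i, j))
  | serp : ∀ (i k : Fin m) (j l : Fin n), i < k → j < l →
      qMatRel (FreeAlgebra.ι K (i, j) * FreeAlgebra.ι K (k, l))
        (FreeAlgebra.ι K (k, l) * FreeAlgebra.ι K (i, j) +
          ((q : K) - (q : K)⁻¹) • (FreeAlgebra.ι K (i, l) * FreeAlgebra.ι K (k, j)))

/-- The algebra of quantum matrices `R_q[M_{m×n}]`, presented by the generators `t_{ij}`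
and the standard quantum matrix relations. -/
def RqMat : Type u := RingQuot (qMatRel K q m n)

instance : Ring (RqMat K q m n) := inferInstanceAs (Ring (RingQuot (qMatRel K q m n)))

instance : Algebra K (RqMat K q m n) :=
  inferInstanceAs (Algebra K (RingQuot (qMatRel K q m n)))

/-- The generator `t_{ij}` of `R_q[M_{m×n}]`. -/
def tGen (i : Fin m) (j : Fin n) : RqMat K q m n :=
  RingQuot.mkAlgHom K (qMatRel K q m n) (FreeAlgebra.ι K (i, j))

/-- The torus element `h_{ij} = (1,…,1,q⁻¹,1,…,1,q,1,…,1) ∈ (Kˣ)^{m+n}`, with `q⁻¹` in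
position `i` and `q` in position `m+j`. -/
def hMat (i : Fin m) (j : Fin n) : Torus K (m + n) :=
  fun s => if s = Fin.castAdd n i then q⁻¹ else if s = Fin.natAdd m j then q else 1

/-- The number of inversions (the length) of a permutation of `Fin k`. -/
def invCount {k : ℕ} (σ : Equiv.Perm (Fin k)) : ℕ :=
  (Finset.univ.filter fun p : Fin k × Fin k => p.1 < p.2 ∧ σ p.2 < σ p.1).card

/-- The quantum minor `Δ_{I,J} = Σ_{σ ∈ S_k} (−q)^{ℓ(σ)} t_{i_1 j_{σ(1)}} ⋯ t_{i_k j_{σ(k)}}`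
associated to row indices `I` and column indices `J`. -/
def qMinor (k : ℕ) (I : Fin k → Fin m) (J : Fin k → Fin n) : RqMat K q m n :=
  ∑ σ : Equiv.Perm (Fin k), (-(q : K)) ^ invCount σ •
    ((List.finRange k).map fun a => tGen K q m n (I a) (J (σ a))).prod

/-- The solid quantum minor `Δ_{[i−min(i,j)+1, i], [j−min(i,j)+1, j]}` (here `i, j` are
0-based, so the minor has size `min i j + 1` and lower-right corner `(i, j)`). -/
def solidMinor (i : Fin m) (j : Fin n) : RqMat K q m n :=
  qMinor K q m n (min (i : ℕ) (j : ℕ) + 1)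
    (fun a => ⟨(i : ℕ) - min (i : ℕ) (j : ℕ) + (a : ℕ), by
      have := a.isLt; have := i.isLt; omega⟩)
    (fun a => ⟨(j : ℕ) - min (i : ℕ) (j : ℕ) + (a : ℕ), by
      have := a.isLt; have := j.isLt; omega⟩)

end QMat

/-!
The ordered monomials are independent by induction on the number of rows: `R_q[M_{(m+1)×n}]` acts on
`R_q[M_{m×n}] ⊗ P`, where `P` is quantum affine `n`-space. The first `m` rows act by left
multiplication and the last row by multiplication with the generators of `P`, twisted through an
algebra map `R_q[M_{m×n}] → M_n(R_q[M_{m×n}])`. Both the twist and the action satisfy the relations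
because the latter are equivalent to the matrix identity `R (t ⊗ t) = (t ⊗ t) R`, which is stable
under products of matrices with mutually commuting entries.

On the generators preceding `t_{ij}`, the skew derivation `δ` sends `t_{kl}` to a multiple of
`t_{kj} t_{il}` if `k < i` and `l < j`, and to zero otherwise. Both factors are in turn killed by
`δ`, so `δ` is nilpotent on generators, hence locally nilpotent by the `q`-Leibniz rule.

Reversing the orders of rows and columns replaces `q` by `q⁻¹` in the relations, which gives the
reverse presentation.
-/

open scoped Kronecker TensorProduct

theorem mul_kronecker_mul_of_commute {A I J L : Type*} [Semiring A] [Fintype J]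
    {s : Matrix I J A} {t : Matrix J L A} (hst : ∀ i j k l, Commute (s i j) (t k l)) :
    (s * t) ⊗ₖ (s * t) = (s ⊗ₖ s) * (t ⊗ₖ t) := by
  ext ⟨i, k⟩ ⟨a, b⟩
  simp only [Matrix.kroneckerMap_apply, Matrix.mul_apply, Finset.sum_mul_sum,
    Fintype.sum_prod_type]
  exact Finset.sum_congr rfl fun j _ => Finset.sum_congr rfl fun l _ =>
    (hst k l j a).symm.mul_mul_mul_comm _ _

section QuantumMatrix

variable {K A B I J L : Type*} [CommRing K] [Ring A] [Algebra K A] [Ring B] [Algebra K B]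
  [LinearOrder I] [LinearOrder J] [LinearOrder L]

/-- The entries of `t` satisfy the defining relations of quantum matrices, over arbitrary linearly
ordered index sets. The order of each product follows the presentation of `R_q[M_{m×n}]`. -/
structure IsQuantumMatrix (q : Kˣ) (t : Matrix I J A) : Prop where
  col : ∀ {i k : I} (j : J), i < k → t i j * t k j = (q : K) • (t k j * t i j)
  row : ∀ (i : I) {j l : J}, j < l → t i j * t i l = (q : K) • (t i l * t i j)
  comm : ∀ {i k : I} {j l : J}, i < k → l < j → t i j * t k l = t k l * t i j
  serp : ∀ {i k : I} {j l : J}, i < k → j < l →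
    t i j * t k l = t k l * t i j + ((q : K) - (q⁻¹ : Kˣ)) • (t i l * t k j)

theorem IsQuantumMatrix.map {q : Kˣ} {t : Matrix I J A} (ht : IsQuantumMatrix q t)
    (f : A →ₐ[K] B) : IsQuantumMatrix q (t.map f) where
  col j h := by simp only [Matrix.map_apply, ← map_mul, ht.col j h, map_smul]
  row i _ _ h := by simp only [Matrix.map_apply, ← map_mul, ht.row i h, map_smul]
  comm h h' := by simp only [Matrix.map_apply, ← map_mul, ht.comm h h']
  serp h h' := by simp only [Matrix.map_apply, ← map_mul, ht.serp h h', map_add, map_smul]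

theorem IsQuantumMatrix.snoc {q : Kˣ} {m : ℕ} {t : Fin m → J → A} (ht : IsQuantumMatrix q t)
    {w : J → A} (row : ∀ {j l}, j < l → w j * w l = (q : K) • (w l * w j))
    (col : ∀ i j, t i j * w j = (q : K) • (w j * t i j))
    (comm : ∀ i {j l}, l < j → t i j * w l = w l * t i j)
    (serp : ∀ i {j l}, j < l →
      t i j * w l = w l * t i j + ((q : K) - (q⁻¹ : Kˣ)) • (t i l * w j)) :
    IsQuantumMatrix q (Fin.snoc t w : Fin (m + 1) → J → A) where
  col {i k} j hik := by
    induction i using Fin.lastCases with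
    | last => exact absurd hik (Fin.le_last k).not_gt
    | cast i =>
      induction k using Fin.lastCases with
      | last => simpa using col i j
      | cast k => simpa using ht.col j (Fin.castSucc_lt_castSucc_iff.1 hik)
  row i {j l} hjl := by
    induction i using Fin.lastCases with
    | last => simpa using row hjl
    | cast i => simpa using ht.row i hjl
  comm {i k j l} hik hlj := by
    induction i using Fin.lastCases with
    | last => exact absurd hik (Fin.le_last k).not_gt
    | cast i =>
      induction k using Fin.lastCases with
      | last => simpa using comm i hlj
      | cast k => simpa using ht.comm (Fin.castSucc_lt_castSucc_iff.1 hik) hlj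
  serp {i k j l} hik hjl := by
    induction i using Fin.lastCases with
    | last => exact absurd hik (Fin.le_last k).not_gt
    | cast i =>
      induction k using Fin.lastCases with
      | last => simpa using serp i hjl
      | cast k => simpa using ht.serp (Fin.castSucc_lt_castSucc_iff.1 hik) hjl

/-- The braid form of the Hecke `R`-matrix of type `A`: the operator on `K^I ⊗ K^I` whose
commutation with `t ⊗ t` encodes the quantum matrix relations
(Faddeev–Reshetikhin–Takhtajan). -/
def rMatrix (q : Kˣ) (I : Type*) [LinearOrder I] : Matrix (I × I) (I × I) K :=
  .of fun a b => (if b = a.swap then if a.1 = a.2 then (q : K) else 1 else 0) +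
    if b = a ∧ a.1 < a.2 then (q : K) - (q⁻¹ : Kˣ) else 0

variable [Fintype I] [Fintype J] (q : Kˣ)

theorem rMatrix_mul_apply {M : Type*} (X : Matrix (I × I) M A) (a : I × I) (b : M) :
    ((rMatrix q I).map (algebraMap K A) * X) a b =
      if a.1 = a.2 then (q : K) • X a b
      else X a.swap b + if a.1 < a.2 then ((q : K) - (q⁻¹ : Kˣ)) • X a b else 0 := by
  obtain ⟨i, k⟩ := a
  simp only [Matrix.mul_apply, Matrix.map_apply, rMatrix, Matrix.of_apply, map_add, add_mul,
    Finset.sum_add_distrib, ite_and, apply_ite (algebraMap K A), map_zero, ite_mul, zero_mul,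
    Finset.sum_ite_eq', Finset.mem_univ, if_true, ← Algebra.smul_def, Prod.swap]
  split_ifs with h h' h' <;> simp_all

theorem rMatrix_isSymm (I : Type*) [LinearOrder I] : (rMatrix q I).IsSymm := by
  ext ⟨i, k⟩ ⟨i', k'⟩
  simp only [rMatrix, Matrix.transpose_apply, Matrix.of_apply, Prod.swap, Prod.mk.injEq]
  grind

theorem mul_rMatrix_apply {M : Type*} (X : Matrix M (J × J) A) (a : M) (b : J × J) :
    (X * (rMatrix q J).map (algebraMap K A)) a b =
      if b.1 = b.2 then (q : K) • X a b
      else X a b.swap + if b.1 < b.2 then ((q : K) - (q⁻¹ : Kˣ)) • X a b else 0 := by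
  refine Eq.trans ?_ (rMatrix_mul_apply q X.transpose b a)
  simp only [Matrix.mul_apply, Matrix.map_apply, Matrix.transpose_apply, Algebra.commutes,
    (rMatrix_isSymm q J).apply]

variable {q}

theorem isQuantumMatrix_iff_rMatrix {t : Matrix I J A} :
    IsQuantumMatrix q t ↔ (rMatrix q I).map (algebraMap K A) * (t ⊗ₖ t) =
      (t ⊗ₖ t) * (rMatrix q J).map (algebraMap K A) := by
  constructor
  · intro ht
    have hq (a : A) : ((q⁻¹ : Kˣ) : K) • (q : K) • a = a := by simp [smul_smul]
    ext ⟨i, k⟩ ⟨j, l⟩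
    rw [rMatrix_mul_apply, mul_rMatrix_apply]
    simp only [Matrix.kroneckerMap_apply, Prod.swap]
    rcases lt_trichotomy i k with hik | rfl | hki <;> rcases lt_trichotomy j l with hjl | rfl | hlj
    · simp [hik, hjl, hik.ne, hjl.ne, ht.comm hik hjl, ht.serp hik hjl]
    · simp [hik, hik.ne, ht.col _ hik, sub_smul, hq]
    · simp [hik, hik.ne, hlj.ne', hlj.not_gt, ht.serp hik hlj, ht.comm hik hlj]
    · simp [hjl, hjl.ne, ht.row _ hjl, sub_smul, hq]
    · simp
    · simp [hlj.ne', hlj.not_gt, ht.row _ hlj]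
    · simp [hjl, hki.ne', hki.not_gt, hjl.ne, ht.serp hki hjl, ht.comm hki hjl]
    · simp [hki.ne', hki.not_gt, ht.col _ hki]
    · simp [hki.ne', hki.not_gt, hlj.ne', hlj.not_gt, ht.comm hki hlj]
  · intro h
    have entry (a : I × I) (b : J × J) := congrFun₂ h a b
    simp only [rMatrix_mul_apply, mul_rMatrix_apply, Matrix.kroneckerMap_apply] at entry
    have comm {i k : I} {j l : J} (hik : i < k) (hlj : l < j) :
        t i j * t k l = t k l * t i j := by
      simpa [hik.ne', hlj.ne', hik.not_gt, hlj.not_gt] using entry (k, i) (j, l)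
    refine ⟨fun {i k} j hik => ?_, fun i {j l} hjl => ?_, comm, fun {i k j l} hik hjl => ?_⟩
    · simpa [hik.ne', hik.not_gt] using entry (k, i) (j, j)
    · simpa [hjl.ne', hjl.not_gt] using (entry (i, i) (l, j)).symm
    · simpa [hik.ne', hjl.ne, hik.not_gt, hjl, comm hik hjl] using entry (k, i) (j, l)

theorem rMatrix_mul_map {M : Type*} (g : B →ₗ[K] A) (X : Matrix (I × I) M B) :
    (rMatrix q I).map (algebraMap K A) * X.map g =
      ((rMatrix q I).map (algebraMap K B) * X).map g := by
  ext a b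
  simp only [Matrix.map_apply, rMatrix_mul_apply, apply_ite g, map_add, map_smul, map_zero]

theorem map_mul_rMatrix {M : Type*} (g : B →ₗ[K] A) (X : Matrix M (J × J) B) :
    X.map g * (rMatrix q J).map (algebraMap K A) =
      (X * (rMatrix q J).map (algebraMap K B)).map g := by
  ext a b
  simp only [Matrix.map_apply, mul_rMatrix_apply, apply_ite g, map_add, map_smul, map_zero]

omit [Fintype I] in
theorem IsQuantumMatrix.mul [Finite I] [Finite L] {s : Matrix I J A} {t : Matrix J L A}
    (hs : IsQuantumMatrix q s) (ht : IsQuantumMatrix q t)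
    (hst : ∀ i j k l, Commute (s i j) (t k l)) : IsQuantumMatrix q (s * t) := by
  cases nonempty_fintype I
  cases nonempty_fintype L
  rw [isQuantumMatrix_iff_rMatrix] at hs ht ⊢
  rw [mul_kronecker_mul_of_commute hst, ← Matrix.mul_assoc, hs, Matrix.mul_assoc, ht,
    Matrix.mul_assoc]

/-- The `L`-operators of the vector representation: `lMatrix q J s r`, for `r ≤ s`, is the operator
by which the dual generator `(s, r)` acts on `K^J`, so that `lMatrix` is an `R`-matrix with its four
indices regrouped. -/
def lMatrix (q : Kˣ) (J : Type*) [LinearOrder J] : Matrix J J (Matrix J J K) :=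
  .of fun s r =>
    if s = r then 1 + .single r r ((q⁻¹ : Kˣ) - 1 : K)
    else if r < s then .single s r ((q⁻¹ : Kˣ) - q : K)
    else 0

section LMatrix

variable (q : Kˣ) {r s : J}

omit [Fintype J]

theorem lMatrix_apply (s r l j : J) :
    lMatrix q J s r l j =
      if s = r ∧ l = j then if s = l then ((q⁻¹ : Kˣ) : K) else 1
      else if s = l ∧ r = j ∧ r < s then ((q⁻¹ : Kˣ) : K) - q else 0 := by
  simp only [lMatrix, Matrix.of_apply]
  split_ifs <;> simp [Matrix.one_apply, Matrix.single_apply] <;> grind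

theorem lMatrix_apply_comm (s r l j : J) : lMatrix q J s r l j = lMatrix q J l j s r := by
  simp only [lMatrix_apply]
  grind

theorem lMatrix_of_lt (h : s < r) : lMatrix q J s r = 0 := by
  simp [lMatrix, h.ne, h.not_gt]

theorem lMatrix_of_gt (h : r < s) : lMatrix q J s r = .single s r ((q⁻¹ : Kˣ) - q : K) := by
  simp [lMatrix, h, h.ne']

variable [Fintype J]

theorem lMatrix_self_mul_single (a b : J) (x : K) :
    lMatrix q J r r * .single a b x = .single a b (if a = r then ((q⁻¹ : Kˣ) : K) * x else x) := by
  split_ifs with h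
  · simp [lMatrix, h, add_mul, sub_mul, ← Matrix.single_add]
  · simp [lMatrix, Ne.symm h, add_mul]

theorem single_mul_lMatrix_self (a b : J) (x : K) :
    .single a b x * lMatrix q J r r = .single a b (if b = r then ((q⁻¹ : Kˣ) : K) * x else x) := by
  split_ifs with h
  · simp [lMatrix, h, mul_add, mul_sub, ← Matrix.single_add, mul_comm _ x]
  · simp [lMatrix, h, mul_add]

theorem commute_lMatrix_self (r s : J) : Commute (lMatrix q J r r) (lMatrix q J s s) := by
  have h : lMatrix q J s s = 1 + .single s s ((q⁻¹ : Kˣ) - 1 : K) := by simp [lMatrix]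
  rw [h]
  refine (Commute.one_right _).add_right ?_
  exact (lMatrix_self_mul_single q s s _).trans (single_mul_lMatrix_self q s s _).symm

theorem lMatrix_mul_lMatrix_of_lt {i k j l : J} (hik : i < k) (hjl : j < l) :
    lMatrix q J i j * lMatrix q J k l = lMatrix q J k l * lMatrix q J i j +
      ((q : K) - (q⁻¹ : Kˣ)) • (lMatrix q J i l * lMatrix q J k j) := by
  rcases lt_trichotomy i j with h | rfl | h
  · simp [lMatrix_of_lt q h, lMatrix_of_lt q (h.trans hjl)]
  · rcases lt_trichotomy k l with h | rfl | h
    · simp [lMatrix_of_lt q h, lMatrix_of_lt q hjl]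
    · simp [lMatrix_of_lt q hik, (commute_lMatrix_self q i k).eq]
    · simp [lMatrix_of_lt q hjl, lMatrix_of_gt q h, lMatrix_self_mul_single,
        single_mul_lMatrix_self, hik.ne', hjl.ne']
  · rcases lt_trichotomy k l with hkl | rfl | hlk
    · simp [lMatrix_of_lt q hkl, lMatrix_of_lt q (hik.trans hkl)]
    · simp [lMatrix_of_lt q hik, lMatrix_of_gt q h, lMatrix_self_mul_single,
        single_mul_lMatrix_self, hik.ne, hjl.ne]
    · have hjk := h.trans hik
      rcases lt_trichotomy i l with hil | rfl | hli
      · simp [lMatrix_of_lt q hil, lMatrix_of_gt q h, lMatrix_of_gt q hlk, hil.ne', hjk.ne]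
      · simp [lMatrix_of_gt q h, lMatrix_of_gt q hik, lMatrix_of_gt q hjk,
          lMatrix_self_mul_single, hik.ne', hjk.ne, ← Matrix.single_add, ← add_mul]
      · simp [lMatrix_of_gt q h, lMatrix_of_gt q hlk, lMatrix_of_gt q hjk,
          lMatrix_of_gt q hli, hli.ne, (hli.trans hik).ne, hjk.ne]

theorem isQuantumMatrix_lMatrix : IsQuantumMatrix q (lMatrix q J) where
  col {i k} j hik := by
    rcases lt_trichotomy i j with h | rfl | h
    · simp [lMatrix_of_lt q h]
    · simp [lMatrix_of_gt q hik, lMatrix_self_mul_single, single_mul_lMatrix_self, hik.ne']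
    · simp [lMatrix_of_gt q h, lMatrix_of_gt q (h.trans hik), h.ne, (h.trans hik).ne]
  row i {j l} hjl := by
    rcases lt_trichotomy i l with h | rfl | h
    · simp [lMatrix_of_lt q h]
    · simp [lMatrix_of_gt q hjl, lMatrix_self_mul_single, single_mul_lMatrix_self, hjl.ne]
    · simp [lMatrix_of_gt q h, lMatrix_of_gt q (hjl.trans h), h.ne, (hjl.trans h).ne]
  comm {i k j l} hik hlj := by
    rcases lt_trichotomy i j with h | rfl | h
    · simp [lMatrix_of_lt q h]
    · simp [lMatrix_of_gt q (hlj.trans hik), lMatrix_self_mul_single, single_mul_lMatrix_self,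
        hik.ne', hlj.ne]
    · simp [lMatrix_of_gt q h, lMatrix_of_gt q ((hlj.trans h).trans hik), (h.trans hik).ne,
        (hlj.trans h).ne]
  serp hik hjl := lMatrix_mul_lMatrix_of_lt q hik hjl

omit [Fintype I] in
theorem IsQuantumMatrix.scalar_mul_lMatrix [Finite I] {q : Kˣ} {t : Matrix I J A}
    (ht : IsQuantumMatrix q t) :
    IsQuantumMatrix q (t.map (Matrix.scalarAlgHom J K) *
      (lMatrix q J).map (Algebra.ofId K A).mapMatrix) :=
  (ht.map _).mul ((isQuantumMatrix_lMatrix q).map _) fun _ _ _ _ =>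
    Matrix.scalar_commute_iff.2 <| Matrix.ext fun _ _ => (Algebra.commutes _ _).symm

theorem IsQuantumMatrix.snoc_of_lMatrix {q : Kˣ} {m : ℕ} {t : Matrix (Fin m) J A}
    (ht : IsQuantumMatrix q t) {w : J → A}
    (row : ∀ {j l}, j < l → w j * w l = (q : K) • (w l * w j))
    (cross : ∀ i r j, w j * t i r = ∑ p, ∑ s, lMatrix q J s r j p • (t i s * w p)) :
    IsQuantumMatrix q (Fin.snoc t w : Fin (m + 1) → J → A) := by
  have cross' (i r j) : w j * t i r =
      (if r = j then ((q⁻¹ : Kˣ) : K) else 1) • (t i r * w j) +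
        if r < j then (((q⁻¹ : Kˣ) : K) - q) • (t i j * w r) else 0 := by
    have entry (s p : J) : lMatrix q J s r j p =
        (if s = r then if p = j then if r = j then ((q⁻¹ : Kˣ) : K) else 1 else 0 else 0) +
          if s = j then if p = r then if r < j then ((q⁻¹ : Kˣ) : K) - q else 0 else 0 else 0 := by
      rw [lMatrix_apply]
      grind
    simp only [cross, entry, add_smul, ite_smul, zero_smul, Finset.sum_add_distrib,
      Finset.sum_ite_eq', Finset.mem_univ, if_true]
  refine ht.snoc row (fun i j => ?_) (fun i j l h => ?_) fun i j l h => ?_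
  · simp [cross', smul_smul]
  · simp [cross', h.ne', h.not_gt]
  · simp only [cross', h.ne, h, if_true, if_false, one_smul]
    module

end LMatrix

section EntryMap

variable {φ : A →ₐ[K] Matrix J J A}

/-- The matrix of linear maps whose `(j, l)` entry sends `a` to the `(j, l)` entry of `φ a`. -/
def entryMap (φ : A →ₐ[K] Matrix J J A) : Matrix J J (Module.End K A) :=
  .of fun j l => Matrix.entryLinearMap K A j l ∘ₗ φ.toLinearMap

@[simp]
theorem entryMap_apply (j l : J) (a : A) : entryMap φ j l a = φ a j l := rfl

/-- The twofold iterate of `φ`; its entries at `a` are the values at `a` of the products of two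
entries of `entryMap φ`. -/
def iterateHom (φ : A →ₐ[K] Matrix J J A) : A →ₐ[K] Matrix (J × J) (J × J) A :=
  ((Matrix.reindexAlgEquiv K A (Equiv.prodComm J J)).toAlgHom.comp
    (Matrix.compAlgEquiv J J A K).toAlgHom).comp (φ.mapMatrix.comp φ)

theorem iterateHom_apply (a : A) :
    iterateHom φ a = (entryMap φ ⊗ₖ entryMap φ).map (LinearMap.applyₗ a) := rfl

/-- The elements whose image under `iterateHom φ` commutes with the `R`-matrix form a subalgebra, so
it suffices to test generators. -/
theorem isQuantumMatrix_entryMap {S : Set A} (hS : Algebra.adjoin K S = ⊤)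
    (hφ : ∀ a ∈ S, Commute ((rMatrix q J).map (algebraMap K A)) (iterateHom φ a)) :
    IsQuantumMatrix q (entryMap φ) := by
  have hle : Algebra.adjoin K S ≤
      (Subalgebra.centralizer K {(rMatrix q J).map (algebraMap K A)}).comap (iterateHom φ) :=
    Algebra.adjoin_le fun a ha => Set.mem_centralizer_iff.2 fun _ h => h ▸ (hφ a ha).eq
  have hcomm (a : A) : Commute ((rMatrix q J).map (algebraMap K A)) (iterateHom φ a) :=
    hle (hS ▸ Algebra.mem_top) _ rfl
  rw [isQuantumMatrix_iff_rMatrix]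
  ext j l a
  have key := (hcomm a).eq
  rw [iterateHom_apply, rMatrix_mul_map, map_mul_rMatrix] at key
  exact congrFun₂ key j l

/-- By the symmetry `lMatrix_apply_comm`, applying `φ` twice to a row on which it acts through
`lMatrix` amounts to multiplying entries of `lMatrix`. -/
theorem commute_iterateHom {x : J → A}
    (hφ : ∀ r j l, φ (x r) j l = ∑ s, lMatrix q J s r j l • x s) (r : J) :
    Commute ((rMatrix q J).map (algebraMap K A)) (iterateHom φ (x r)) := by
  let g : Matrix J J K →ₗ[K] A :=
    ∑ u, (Matrix.entryLinearMap K K u r).smulRight (x u)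
  have hx : iterateHom φ (x r) = (lMatrix q J ⊗ₖ lMatrix q J).map g := by
    ext ⟨p, p'⟩ ⟨l, l'⟩
    simp only [iterateHom_apply, Matrix.map_apply, Matrix.kroneckerMap_apply, g,
      LinearMap.applyₗ_apply_apply, Module.End.mul_apply, entryMap_apply, hφ, map_sum, map_smul,
      LinearMap.sum_apply, LinearMap.smulRight_apply,
      Matrix.entryLinearMap_apply, Matrix.mul_apply, Finset.smul_sum, Finset.sum_smul, smul_smul]
    rw [Finset.sum_comm]
    refine Finset.sum_congr rfl fun u _ => Finset.sum_congr rfl fun s _ => ?_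
    rw [lMatrix_apply_comm q p l, lMatrix_apply_comm q p' l', mul_comm]
  rw [commute_iff_eq, hx, rMatrix_mul_map, map_mul_rMatrix,
    isQuantumMatrix_iff_rMatrix.1 (isQuantumMatrix_lMatrix q)]

end EntryMap

section TwistedMatrix

variable {P : Type*} [AddCommGroup P] [Module K P] {φ : A →ₐ[K] Matrix J J A}

/-- The matrix with entries `∑ p, φ_{j p} ⊗ y_{p l}` acting on `A ⊗ P`. With left multiplications by
elements of `A` it generates the algebra `A` extended by a copy of the algebra of `y`, the
commutation rule being prescribed by `φ`. -/
def twistedMatrix (φ : A →ₐ[K] Matrix J J A) (y : Matrix J L (Module.End K P)) :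
    Matrix J L (Module.End K (A ⊗[K] P)) :=
  (entryMap φ).map (Module.End.rTensorAlgHom K A P) * y.map (Module.End.lTensorAlgHom K P A)

theorem commute_rTensorAlgHom_lTensorAlgHom (f : Module.End K A) (g : Module.End K P) :
    Commute (Module.End.rTensorAlgHom K A P f) (Module.End.lTensorAlgHom K P A g) := by
  change f.rTensor P ∘ₗ g.lTensor A = g.lTensor A ∘ₗ f.rTensor P
  rw [LinearMap.rTensor_comp_lTensor, LinearMap.lTensor_comp_rTensor]

theorem isQuantumMatrix_twistedMatrix [Finite L] {y : Matrix J L (Module.End K P)}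
    (hφ : IsQuantumMatrix q (entryMap φ)) (hy : IsQuantumMatrix q y) :
    IsQuantumMatrix q (twistedMatrix φ y) :=
  (hφ.map _).mul (hy.map _) fun i j k l =>
    commute_rTensorAlgHom_lTensorAlgHom (entryMap φ i j) (y k l)

omit [LinearOrder L] in
theorem twistedMatrix_tmul (y : Matrix J L (Module.End K P)) (j : J) (l : L) (a : A) (x : P) :
    twistedMatrix φ y j l (a ⊗ₜ x) = ∑ p, φ a j p ⊗ₜ y p l x := by
  simp only [twistedMatrix, Matrix.mul_apply, LinearMap.sum_apply]
  rfl

omit [LinearOrder L] in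
theorem twistedMatrix_mul_rTensor_mulLeft (y : Matrix J L (Module.End K P)) (j : J) (l : L)
    (a : A) :
    twistedMatrix φ y j l * (LinearMap.mulLeft K a).rTensor P =
      ∑ p, (LinearMap.mulLeft K (φ a j p)).rTensor P * twistedMatrix φ y p l := by
  ext b x
  simp only [TensorProduct.AlgebraTensorModule.curry_apply, LinearMap.restrictScalars_self,
    TensorProduct.curry_apply, Module.End.mul_apply, LinearMap.rTensor_tmul,
    LinearMap.mulLeft_apply, twistedMatrix_tmul, map_mul, Matrix.mul_apply, LinearMap.sum_apply,
    map_sum, TensorProduct.sum_tmul]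
  exact Finset.sum_comm

end TwistedMatrix

end QuantumMatrix

section RqMat

variable {K : Type*} [Field K] {q : Kˣ} {m n : ℕ} {A : Type*} [Ring A] [Algebra K A]

variable (K q m n) in
/-- The presentation of `R_q[M_{m×n}]` as a quotient of the free algebra, with codomain `RqMat`
rather than the `RingQuot` it unfolds to. -/
def freeToRqMat : FreeAlgebra K (Fin m × Fin n) →ₐ[K] RqMat K q m n :=
  RingQuot.mkAlgHom K (qMatRel K q m n)

theorem freeToRqMat_eq {x y : FreeAlgebra K (Fin m × Fin n)} (h : qMatRel K q m n x y) :
    freeToRqMat K q m n x = freeToRqMat K q m n y :=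
  RingQuot.mkAlgHom_rel K h

theorem freeToRqMat_ι (i : Fin m) (j : Fin n) :
    freeToRqMat K q m n (FreeAlgebra.ι K (i, j)) = tGen K q m n i j := rfl

theorem isQuantumMatrix_tGen : IsQuantumMatrix q (tGen K q m n) where
  col j h := by simpa only [map_mul, map_smul, freeToRqMat_ι] using freeToRqMat_eq (.col _ _ j h)
  row i _ _ h := by
    simpa only [map_mul, map_smul, freeToRqMat_ι] using freeToRqMat_eq (.row i _ _ h)
  comm h h' := by simpa only [map_mul, freeToRqMat_ι] using freeToRqMat_eq (.comm _ _ _ _ h h')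
  serp h h' := by
    simpa only [map_mul, map_add, map_smul, freeToRqMat_ι, Units.val_inv_eq_inv_val] using
      freeToRqMat_eq (.serp _ _ _ _ h h')

/-- The universal property of `R_q[M_{m×n}]`. -/
def IsQuantumMatrix.lift {t : Matrix (Fin m) (Fin n) A} (ht : IsQuantumMatrix q t) :
    RqMat K q m n →ₐ[K] A :=
  RingQuot.liftAlgHom K ⟨FreeAlgebra.lift K fun a => t a.1 a.2, fun x y h => by
    induction h with
    | col i k j h => simpa using ht.col j h
    | row i j l h => simpa using ht.row i h
    | comm i k j l h h' => simpa using ht.comm h h'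
    | serp i k j l h h' => simpa using ht.serp h h'⟩

@[simp]
theorem IsQuantumMatrix.lift_tGen {t : Matrix (Fin m) (Fin n) A} (ht : IsQuantumMatrix q t)
    (i : Fin m) (j : Fin n) : ht.lift (tGen K q m n i j) = t i j :=
  (RingQuot.liftAlgHom_mkAlgHom_apply K _ _ _).trans (FreeAlgebra.lift_ι_apply _ _)

theorem adjoin_range_tGen :
    Algebra.adjoin K (Set.range fun a : Fin m × Fin n => tGen K q m n a.1 a.2) = ⊤ := by
  have h : (Set.range fun a : Fin m × Fin n => tGen K q m n a.1 a.2) =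
      freeToRqMat K q m n '' Set.range (FreeAlgebra.ι K) :=
    Set.range_comp (freeToRqMat K q m n) (FreeAlgebra.ι K)
  rw [h, ← AlgHom.map_adjoin, FreeAlgebra.adjoin_range_ι, Algebra.map_top, AlgHom.range_eq_top]
  exact RingQuot.mkAlgHom_surjective K _

theorem RqMat_hom_ext {f g : RqMat K q m n →ₐ[K] A}
    (h : ∀ i j, f (tGen K q m n i j) = g (tGen K q m n i j)) : f = g :=
  AlgHom.ext_of_adjoin_eq_top adjoin_range_tGen (Set.forall_mem_range.2 fun a => h a.1 a.2)

end RqMat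

section Twist

variable {K : Type*} [Field K] {q : Kˣ} {m n : ℕ}

variable (K q m n) in
/-- The homomorphism describing how a new last row `w` commutes with the generators:
`w_j a = ∑ p, (twistHom a)_{j p} w_p`. -/
def twistHom : RqMat K q m n →ₐ[K] Matrix (Fin n) (Fin n) (RqMat K q m n) :=
  (isQuantumMatrix_tGen (K := K) (q := q) (m := m)).scalar_mul_lMatrix.lift

theorem twistHom_tGen (i : Fin m) (r j l : Fin n) :
    twistHom K q m n (tGen K q m n i r) j l =
      ∑ s, lMatrix q (Fin n) s r j l • tGen K q m n i s := by
  rw [twistHom, IsQuantumMatrix.lift_tGen, Matrix.mul_apply, Matrix.sum_apply]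
  refine Finset.sum_congr rfl fun s _ => ?_
  rw [Algebra.smul_def, Algebra.commutes]
  exact Matrix.diagonal_mul _ _ _ _

theorem isQuantumMatrix_entryMap_twistHom :
    IsQuantumMatrix q (entryMap (twistHom K q m n)) :=
  isQuantumMatrix_entryMap adjoin_range_tGen <| Set.forall_mem_range.2 fun a =>
    commute_iterateHom (twistHom_tGen a.1) a.2

end Twist

section QuantumSpace

variable {K : Type*} [CommRing K] {J : Type*} [LinearOrder J]

/-- The substitution by which the `j`-th generator of quantum affine space moves past the earlier
ones. -/
def quantumShift (q : Kˣ) (j : J) : MvPolynomial J K →ₐ[K] MvPolynomial J K :=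
  MvPolynomial.aeval fun s => if s < j then ((q⁻¹ : Kˣ) : K) • .X s else .X s

theorem quantumShift_X (q : Kˣ) (j s : J) :
    quantumShift q j (.X s : MvPolynomial J K) =
      if s < j then ((q⁻¹ : Kˣ) : K) • .X s else .X s :=
  MvPolynomial.aeval_X _ _

theorem quantumShift_comm (q : Kˣ) (j l : J) (p : MvPolynomial J K) :
    quantumShift q j (quantumShift q l p) = quantumShift q l (quantumShift q j p) := by
  suffices h : (quantumShift q j).comp (quantumShift (K := K) q l) =
      (quantumShift q l).comp (quantumShift q j) from DFunLike.congr_fun h p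
  ext1 s
  simp only [AlgHom.comp_apply, quantumShift_X]
  split_ifs with h h' h' <;> simp only [map_smul, quantumShift_X, h, h', if_true, if_false]

/-- Multiplication by the `j`-th generator of the quantum affine space `y_j y_l = q y_l y_j`,
`j < l`, in its basis of ordered monomials, which is identified with the basis of the polynomial
ring. -/
def quantumMul (q : Kˣ) (j : J) : Module.End K (MvPolynomial J K) :=
  LinearMap.mulLeft K (.X j) ∘ₗ (quantumShift q j).toLinearMap

theorem quantumMul_apply (q : Kˣ) (j : J) (p : MvPolynomial J K) :
    quantumMul q j p = .X j * quantumShift q j p := rfl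

theorem quantumMul_mul_quantumMul (q : Kˣ) {j l : J} (h : j < l) :
    quantumMul q j * quantumMul q l = (q : K) • (quantumMul q l * quantumMul q j) := by
  refine LinearMap.ext fun p => ?_
  simp [quantumMul_apply, quantumShift_X, h, h.not_gt, quantumShift_comm q j l p, smul_smul,
    mul_left_comm]

theorem isQuantumMatrix_quantumMul (q : Kˣ) :
    IsQuantumMatrix q (.of fun (j : J) (_ : Unit) => quantumMul (K := K) q j) where
  col _ h := quantumMul_mul_quantumMul q h
  row _ _ _ h := absurd h (lt_irrefl _)
  comm _ h := absurd h (lt_irrefl _)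
  serp _ h := absurd h (lt_irrefl _)

theorem quantumMul_pow_apply {q : Kˣ} {j : J} {p : MvPolynomial J K} (hp : quantumShift q j p = p)
    (k : ℕ) : (quantumMul q j ^ k) p = .X j ^ k * p := by
  induction k with
  | zero => simp
  | succ k ih =>
    rw [pow_succ', Module.End.mul_apply, ih, quantumMul_apply, map_mul, map_pow, quantumShift_X,
      if_neg (lt_irrefl j), hp, pow_succ', mul_assoc]

theorem prod_quantumMul_pow_apply_one (q : Kˣ) (e : J → ℕ) {L : List J} (hL : L.Pairwise (· < ·)) :
    (L.map fun j => quantumMul q j ^ e j).prod (1 : MvPolynomial J K) =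
      (L.map fun j => .X j ^ e j).prod := by
  induction L with
  | nil => rfl
  | cons j L ih =>
    obtain ⟨hj, hL⟩ := List.pairwise_cons.1 hL
    have hfix : quantumShift q j (L.map fun l => (.X l ^ e l : MvPolynomial J K)).prod =
        (L.map fun l => .X l ^ e l).prod := by
      rw [map_list_prod, List.map_map]
      congr 1
      refine List.map_congr_left fun l hl => ?_
      rw [Function.comp_apply, map_pow, quantumShift_X, if_neg (hj l hl).not_gt]
    rw [List.map_cons, List.prod_cons, Module.End.mul_apply, ih hL, quantumMul_pow_apply hfix,
      List.map_cons, List.prod_cons]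

theorem linearIndependent_ordMonomial_quantumMul {K : Type*} [Field K] (q : Kˣ) (n : ℕ) :
    LinearIndependent K fun e : Fin n → ℕ => ordMonomial (quantumMul (K := K) q) e 1 := by
  have h (e : Fin n → ℕ) : ordMonomial (quantumMul (K := K) q) e 1 =
      MvPolynomial.basisMonomials (Fin n) K (Finsupp.equivFunOnFinite.symm e) := by
    rw [ordMonomial, prod_quantumMul_pow_apply_one q e (List.pairwise_lt_finRange n)]
    simp [MvPolynomial.monomial_eq, Finsupp.prod_fintype, ← List.ofFn_eq_map, List.prod_ofFn]
  simp only [h]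
  exact (MvPolynomial.basisMonomials (Fin n) K).linearIndependent.comp _ (Equiv.injective _)

end QuantumSpace

section MatrixMonomial

variable {K A B : Type*} [CommRing K] [Ring A] [Algebra K A] [Ring B] [Algebra K B] {m n : ℕ}

theorem map_ordMonomial {N : ℕ} (f : A →ₐ[K] B) (x : Fin N → A) (e : Fin N → ℕ) :
    f (ordMonomial x e) = ordMonomial (fun k => f (x k)) e := by
  simp [ordMonomial, map_list_prod, Function.comp_def]

/-- The product over the rows of `t`, in order, of the ordered monomials in each row. -/
def matrixMonomial (t : Fin m → Fin n → A) (e : Fin m → Fin n → ℕ) : A :=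
  ((List.finRange m).map fun i => ordMonomial (t i) (e i)).prod

theorem matrixMonomial_snoc (t : Fin m → Fin n → A) (w : Fin n → A)
    (e : Fin (m + 1) → Fin n → ℕ) :
    matrixMonomial (Fin.snoc t w : Fin (m + 1) → Fin n → A) e =
      matrixMonomial t (Fin.init e) * ordMonomial w (e (Fin.last m)) := by
  simp [matrixMonomial, List.finRange_succ_last, Function.comp_def, Fin.init_def]

theorem map_matrixMonomial (f : A →ₐ[K] B) (t : Fin m → Fin n → A) (e : Fin m → Fin n → ℕ) :
    f (matrixMonomial t e) = matrixMonomial (fun i j => f (t i j)) e := by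
  simp [matrixMonomial, map_list_prod, Function.comp_def, map_ordMonomial]

/-- The entries of the matrix `t`, enumerated in the lexicographic order of their positions. -/
def lexEntries {A : Type*} (t : Fin m → Fin n → A) (l : Fin (m * n)) : A :=
  t (finProdFinEquiv.symm l).1 (finProdFinEquiv.symm l).2

theorem ordMonomial_lexEntries (t : Fin m → Fin n → A) (e : Fin (m * n) → ℕ) :
    ordMonomial (lexEntries t) e =
      matrixMonomial t fun i j => e (finProdFinEquiv (i, j)) := by
  have hindex (i : Fin m) (j : Fin n) (h : (i : ℕ) * n + j < m * n) :
      (⟨i * n + j, h⟩ : Fin (m * n)) = finProdFinEquiv (i, j) :=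
    Fin.ext (by simp [add_comm, mul_comm])
  simp only [ordMonomial, lexEntries, matrixMonomial, ← List.ofFn_eq_map, List.ofFn_mul,
    List.prod_flatten, hindex, List.map_ofFn, Function.comp_def, Equiv.symm_apply_apply]

end MatrixMonomial

section RowExtension

variable {K A P : Type*} [CommRing K] [Ring A] [Algebra K A] [AddCommGroup P] [Module K P]
  {m n : ℕ} {J : Type*} [Fintype J] [LinearOrder J]

variable (K P) in
/-- The action of `A` on `A ⊗ P` by left multiplication. -/
def mulLeftTensor : A →ₐ[K] Module.End K (A ⊗[K] P) :=
  (Module.End.rTensorAlgHom K A P).comp (Algebra.lmul K A)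

theorem mulLeftTensor_tmul (a b : A) (p : P) : mulLeftTensor K P a (b ⊗ₜ p) = (a * b) ⊗ₜ p := rfl

/-- The rows of `t`, acting on `A ⊗ P` by left multiplication, followed by the row obtained from `y`
by twisting with `φ`. -/
def rowExtension (t : Fin m → J → A) (φ : A →ₐ[K] Matrix J J A) (y : J → Module.End K P) :
    Fin (m + 1) → J → Module.End K (A ⊗[K] P) :=
  Fin.snoc (fun i j => mulLeftTensor K P (t i j)) fun j =>
    twistedMatrix φ (.of fun j (_ : Unit) => y j) j ()

theorem isQuantumMatrix_rowExtension {q : Kˣ} {t : Fin m → J → A} {φ : A →ₐ[K] Matrix J J A}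
    {y : J → Module.End K P} (ht : IsQuantumMatrix q (.of t))
    (hφ : IsQuantumMatrix q (entryMap φ))
    (hφt : ∀ i r j l, φ (t i r) j l = ∑ s, lMatrix q J s r j l • t i s)
    (hy : IsQuantumMatrix q (.of fun j (_ : Unit) => y j)) :
    IsQuantumMatrix q (.of (rowExtension t φ y)) := by
  refine (ht.map (mulLeftTensor K P)).snoc_of_lMatrix
    (fun h => (isQuantumMatrix_twistedMatrix hφ hy).col () h) fun i r j => ?_
  refine (twistedMatrix_mul_rTensor_mulLeft _ j () _).trans (Finset.sum_congr rfl fun p _ => ?_)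
  change mulLeftTensor K P (φ (t i r) j p) * _ = _
  simp only [hφt, map_sum, map_smul, Finset.sum_mul, smul_mul_assoc]
  rfl

theorem ordMonomial_apply_of_semiconj {V : Type*} [AddCommGroup V] [Module K V] {N : ℕ}
    {y : Fin N → Module.End K P} {w : Fin N → Module.End K V} {g : P → V}
    (h : ∀ k p, w k (g p) = g (y k p)) (e : Fin N → ℕ) (p : P) :
    ordMonomial w e (g p) = g (ordMonomial y e p) := by
  have hpow (k : Fin N) (d : ℕ) (p : P) : (w k ^ d) (g p) = g ((y k ^ d) p) := by
    rw [Module.End.pow_apply, Module.End.pow_apply]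
    exact (Function.Semiconj.iterate_right (fun p => (h k p).symm) d p).symm
  unfold ordMonomial
  induction List.finRange N generalizing p with
  | nil => rfl
  | cons k L ih =>
    rw [List.map_cons, List.prod_cons, List.map_cons, List.prod_cons, Module.End.mul_apply, ih,
      Module.End.mul_apply, hpow]

theorem matrixMonomial_rowExtension_apply (t : Fin m → Fin n → A)
    (φ : A →ₐ[K] Matrix (Fin n) (Fin n) A) (y : Fin n → Module.End K P)
    (e : Fin (m + 1) → Fin n → ℕ) (p : P) :
    matrixMonomial (rowExtension t φ y) e (1 ⊗ₜ p) =
      matrixMonomial t (Fin.init e) ⊗ₜ ordMonomial y (e (Fin.last m)) p := by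
  have hy (j : Fin n) (p : P) :
      twistedMatrix φ (.of fun j (_ : Unit) => y j) j () (1 ⊗ₜ p) = 1 ⊗ₜ y j p := by
    simp [twistedMatrix_tmul, Matrix.one_apply, TensorProduct.ite_tmul]
  rw [rowExtension, matrixMonomial_snoc, Module.End.mul_apply, ordMonomial_apply_of_semiconj hy,
    ← map_matrixMonomial, mulLeftTensor_tmul, mul_one]

theorem linearIndependent_matrixMonomial_rowExtension_apply [IsDomain K] {t : Fin m → Fin n → A}
    (φ : A →ₐ[K] Matrix (Fin n) (Fin n) A) {y : Fin n → Module.End K P} {p : P}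
    (ht : LinearIndependent K (matrixMonomial t))
    (hy : LinearIndependent K fun e => ordMonomial y e p) :
    LinearIndependent K fun e => matrixMonomial (rowExtension t φ y) e (1 ⊗ₜ p) := by
  have htmul := (ht.tmul_of_isDomain hy).comp _
    (Prod.swap_injective.comp (Fin.snocEquiv fun _ => Fin n → ℕ).symm.injective)
  simp only [matrixMonomial_rowExtension_apply]
  exact htmul

end RowExtension

section PBW

variable {K : Type*} [Field K] {q : Kˣ} {m n : ℕ}

instance : Nontrivial (RqMat K q m n) :=
  have h : IsQuantumMatrix q (0 : Matrix (Fin m) (Fin n) K) := by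
    constructor <;> simp
  h.lift.toRingHom.domain_nontrivial

theorem linearIndependent_matrixMonomial_tGen_of_apply {V : Type*} [AddCommGroup V] [Module K V]
    {t : Fin m → Fin n → Module.End K V} (ht : IsQuantumMatrix q (.of t)) (v : V)
    (hv : LinearIndependent K fun e => matrixMonomial t e v) :
    LinearIndependent K (matrixMonomial (tGen K q m n)) := by
  refine .of_comp (LinearMap.applyₗ v ∘ₗ ht.lift.toLinearMap) ?_
  have hlift (e : Fin m → Fin n → ℕ) :
      ht.lift (matrixMonomial (tGen K q m n) e) = matrixMonomial t e := by
    simp only [map_matrixMonomial, ht.lift_tGen, Matrix.of_apply]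
  convert hv using 2 with e
  exact LinearMap.congr_fun (hlift e) v

theorem linearIndependent_matrixMonomial_tGen (m : ℕ) :
    LinearIndependent K (matrixMonomial (tGen K q m n)) := by
  induction m with
  | zero =>
    refine (linearIndependent_subsingleton_index_iff _).2 fun e => ?_
    simp [matrixMonomial]
  | succ m ih =>
    exact linearIndependent_matrixMonomial_tGen_of_apply
      (isQuantumMatrix_rowExtension isQuantumMatrix_tGen isQuantumMatrix_entryMap_twistHom
        twistHom_tGen (isQuantumMatrix_quantumMul q)) (1 ⊗ₜ 1)
      (linearIndependent_matrixMonomial_rowExtension_apply _ ih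
        (linearIndependent_ordMonomial_quantumMul q n))

theorem linearIndependent_ordMonomial_lexEntries_tGen :
    LinearIndependent K (ordMonomial (lexEntries (tGen K q m n))) := by
  have hinj : Function.Injective fun (e : Fin (m * n) → ℕ) (i : Fin m) (j : Fin n) =>
      e (finProdFinEquiv (i, j)) := fun e e' h => by
    funext l
    obtain ⟨a, rfl⟩ := finProdFinEquiv.surjective l
    exact congrFun₂ h a.1 a.2
  have hcomp := funext (ordMonomial_lexEntries (tGen K q m n))
  exact hcomp ▸ (linearIndependent_matrixMonomial_tGen m).comp _ hinj

end PBW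

section SkewCommutator

variable {K R : Type*} [CommRing K] [Ring R] [Algebra K R] {σ : R →ₐ[K] R} {x : R} {S : Set R}

/-- The `σ`-derivation `a ↦ x a - σ(a) x`, the linear form of `skewDelta`. -/
def skewCommutator (σ : R →ₐ[K] R) (x : R) : Module.End K R :=
  LinearMap.mulLeft K x - LinearMap.mulRight K x ∘ₗ σ.toLinearMap

theorem skewCommutator_apply (a : R) : skewCommutator σ x a = x * a - σ a * x := rfl

theorem skewCommutator_mul (a b : R) :
    skewCommutator σ x (a * b) = σ a * skewCommutator σ x b + skewCommutator σ x a * b := by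
  simp only [skewCommutator_apply, map_mul]
  noncomm_ring

theorem skewCommutator_algebraMap (r : K) : skewCommutator σ x (algebraMap K R r) = 0 := by
  simp [skewCommutator_apply, Algebra.commutes]

theorem skewCommutator_mem_adjoin (hσ : ∀ s ∈ S, σ s ∈ Algebra.adjoin K S)
    (hS : ∀ s ∈ S, skewCommutator σ x s ∈ Algebra.adjoin K S) {a : R}
    (ha : a ∈ Algebra.adjoin K S) : skewCommutator σ x a ∈ Algebra.adjoin K S := by
  have hσ' : Algebra.adjoin K S ≤ (Algebra.adjoin K S).comap σ := Algebra.adjoin_le hσ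
  induction ha using Algebra.adjoin_induction with
  | mem s hs => exact hS s hs
  | algebraMap r =>
    rw [skewCommutator_algebraMap]
    exact zero_mem _
  | add a b _ _ iha ihb =>
    rw [map_add]
    exact add_mem iha ihb
  | mul a b ha hb iha ihb =>
    rw [skewCommutator_mul]
    exact add_mem (mul_mem (hσ' ha) ihb) (mul_mem iha hb)

variable {u : Kˣ}

theorem map_skewCommutator_pow (hx : σ x = u • x) (p : ℕ) (a : R) :
    σ ((skewCommutator σ x ^ p) a) = u ^ p • (skewCommutator σ x ^ p) (σ a) := by
  induction p generalizing a with
  | zero => simp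
  | succ p ih =>
    have hcomm : σ (skewCommutator σ x a) = u • skewCommutator σ x (σ a) := by
      simp only [skewCommutator_apply, map_sub, map_mul, hx, smul_sub, smul_mul_assoc,
        mul_smul_comm]
    rw [pow_succ, Module.End.mul_apply, Module.End.mul_apply, ih, hcomm,
      LinearMap.map_smul_of_tower, smul_smul, pow_succ]

theorem skewCommutator_pow_mul_eq_zero (hx : σ x = u • x) {p r : ℕ} {a b : R}
    (ha : (skewCommutator σ x ^ p) a = 0) (hb : (skewCommutator σ x ^ r) b = 0) :
    (skewCommutator σ x ^ (p + r)) (a * b) = 0 := by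
  obtain ⟨s, hs⟩ : ∃ s, p + r = s := ⟨_, rfl⟩
  rw [hs]
  induction s generalizing p r a b with
  | zero =>
    obtain rfl : p = 0 := by omega
    simp_all
  | succ s ih =>
    rcases p with - | p
    · simp_all
    rcases r with - | r
    · simp_all
    have hσa : (skewCommutator σ x ^ (p + 1)) (σ a) = 0 := by
      rw [← smul_eq_zero_iff_eq (u ^ (p + 1)), ← map_skewCommutator_pow hx, ha, map_zero]
    rw [pow_succ, Module.End.mul_apply] at ha hb
    rw [pow_succ, Module.End.mul_apply, skewCommutator_mul, map_add, ih hσa hb (by omega),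
      ih ha (by rwa [pow_succ, Module.End.mul_apply]) (by omega), add_zero]

theorem exists_skewCommutator_pow_eq_zero (hx : σ x = u • x)
    (hS : ∀ s ∈ S, ∃ p : ℕ, (skewCommutator σ x ^ p) s = 0) {a : R}
    (ha : a ∈ Algebra.adjoin K S) : ∃ p : ℕ, (skewCommutator σ x ^ p) a = 0 := by
  induction ha using Algebra.adjoin_induction with
  | mem s hs => exact hS s hs
  | algebraMap r => exact ⟨1, by rw [pow_one, skewCommutator_algebraMap]⟩
  | add a b _ _ iha ihb =>
    obtain ⟨p, hp⟩ := iha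
    obtain ⟨r, hr⟩ := ihb
    exact ⟨max p r, by rw [map_add, Module.End.pow_map_zero_of_le (le_max_left p r) hp,
      Module.End.pow_map_zero_of_le (le_max_right p r) hr, add_zero]⟩
  | mul a b _ _ iha ihb =>
    obtain ⟨p, hp⟩ := iha
    obtain ⟨r, hr⟩ := ihb
    exact ⟨p + r, skewCommutator_pow_mul_eq_zero hx hp hr⟩

end SkewCommutator

section QuantumMatrixCommutator

variable {K R I J : Type*} [CommRing K] [Ring R] [Algebra K R] [LinearOrder I] [LinearOrder J]
  {q : Kˣ} {t : Matrix I J R} {σ : R →ₐ[K] R} {a b : I × J}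

/-- The scalar by which `t_a` moves past `t_b`, up to lower terms, for `b` before `a` in the
lexicographic order; for `a = b` it is the eigenvalue `q⁻²`. -/
def quantumWeight (q : Kˣ) (a b : I × J) : Kˣ :=
  (if b.1 = a.1 then q⁻¹ else 1) * if b.2 = a.2 then q⁻¹ else 1

/-- The entries of `t` at the positions before `a` in the lexicographic order. -/
def entriesBefore (t : Matrix I J R) (a : I × J) : Set R :=
  (fun b : I × J => t b.1 b.2) '' {b | toLex b < toLex a}

theorem IsQuantumMatrix.skewCommutator_apply (ht : IsQuantumMatrix q t)
    (hσ : ∀ b : I × J, σ (t b.1 b.2) = quantumWeight q a b • t b.1 b.2)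
    (hb : toLex b < toLex a) :
    skewCommutator σ (t a.1 a.2) (t b.1 b.2) =
      if b.1 < a.1 ∧ b.2 < a.2 then ((q⁻¹ : Kˣ) - q : K) • (t b.1 a.2 * t a.1 b.2) else 0 := by
  obtain ⟨i, j⟩ := b
  obtain ⟨k, l⟩ := a
  rw [_root_.skewCommutator_apply, hσ, smul_mul_assoc, Units.smul_def]
  simp only [Prod.Lex.toLex_lt_toLex] at hb
  rcases hb with hik | ⟨rfl, hjl⟩
  · rcases lt_trichotomy j l with hjl | rfl | hlj
    · rw [ht.serp hik hjl]
      simp only [quantumWeight, hik.ne, hjl.ne, hik, hjl, and_self, if_true, if_false, mul_one,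
        Units.val_one, smul_add, one_smul, sub_add_cancel_left]
      module
    · rw [ht.col j hik]
      simp [quantumWeight, hik.ne, smul_smul]
    · rw [ht.comm hik hlj]
      simp [quantumWeight, hik.ne, hlj.ne', hlj.not_gt]
  · rw [ht.row i hjl]
    simp [quantumWeight, hjl.ne, smul_smul]

theorem IsQuantumMatrix.skewCommutator_mem_adjoin (ht : IsQuantumMatrix q t)
    (hσ : ∀ b : I × J, σ (t b.1 b.2) = quantumWeight q a b • t b.1 b.2) {x : R}
    (hx : x ∈ Algebra.adjoin K (entriesBefore t a)) :
    skewCommutator σ (t a.1 a.2) x ∈ Algebra.adjoin K (entriesBefore t a) := by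
  refine _root_.skewCommutator_mem_adjoin ?_ ?_ hx
  · rintro _ ⟨b, hb, rfl⟩
    rw [hσ, Units.smul_def]
    exact Subalgebra.smul_mem _ (Algebra.subset_adjoin (Set.mem_image_of_mem _ hb)) _
  · rintro _ ⟨b, hb, rfl⟩
    rw [ht.skewCommutator_apply hσ hb]
    split_ifs with hlt
    · have hcol : t b.1 a.2 ∈ Algebra.adjoin K (entriesBefore t a) :=
        Algebra.subset_adjoin ⟨(b.1, a.2), Prod.Lex.toLex_lt_toLex.2 (.inl hlt.1), rfl⟩
      have hrow : t a.1 b.2 ∈ Algebra.adjoin K (entriesBefore t a) :=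
        Algebra.subset_adjoin ⟨(a.1, b.2), Prod.Lex.toLex_lt_toLex.2 (.inr ⟨rfl, hlt.2⟩), rfl⟩
      exact Subalgebra.smul_mem _ (mul_mem hcol hrow) _
    · exact zero_mem _

theorem IsQuantumMatrix.skewCommutator_sq_apply_eq_zero (ht : IsQuantumMatrix q t)
    (hσ : ∀ b : I × J, σ (t b.1 b.2) = quantumWeight q a b • t b.1 b.2)
    (hb : toLex b < toLex a) : (skewCommutator σ (t a.1 a.2) ^ 2) (t b.1 b.2) = 0 := by
  rw [pow_two, Module.End.mul_apply, ht.skewCommutator_apply hσ hb]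
  split_ifs with hlt
  · have hcol : skewCommutator σ (t a.1 a.2) (t b.1 a.2) = 0 := by
      simpa using ht.skewCommutator_apply (b := (b.1, a.2)) hσ
        (Prod.Lex.toLex_lt_toLex.2 (.inl hlt.1))
    have hrow : skewCommutator σ (t a.1 a.2) (t a.1 b.2) = 0 := by
      simpa using ht.skewCommutator_apply (b := (a.1, b.2)) hσ
        (Prod.Lex.toLex_lt_toLex.2 (.inr ⟨rfl, hlt.2⟩))
    rw [map_smul, skewCommutator_mul, hcol, hrow, mul_zero, zero_mul, add_zero, smul_zero]
  · exact map_zero _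

theorem IsQuantumMatrix.exists_skewCommutator_pow_eq_zero (ht : IsQuantumMatrix q t)
    (hσ : ∀ b : I × J, σ (t b.1 b.2) = quantumWeight q a b • t b.1 b.2) {x : R}
    (hx : x ∈ Algebra.adjoin K (entriesBefore t a)) :
    ∃ p : ℕ, (skewCommutator σ (t a.1 a.2) ^ p) x = 0 := by
  refine _root_.exists_skewCommutator_pow_eq_zero (hσ a) ?_ hx
  rintro _ ⟨b, hb, rfl⟩
  exact ⟨2, ht.skewCommutator_sq_apply_eq_zero hσ hb⟩

end QuantumMatrixCommutator

section Reversal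

variable {K A I I' J J' : Type*} [CommRing K] [Ring A] [Algebra K A]
  [LinearOrder I] [LinearOrder I'] [LinearOrder J] [LinearOrder J'] {q : Kˣ}

theorem IsQuantumMatrix.submatrix_of_strictAnti {t : Matrix I J A} (ht : IsQuantumMatrix q t)
    {f : I' → I} {g : J' → J} (hf : StrictAnti f) (hg : StrictAnti g) :
    IsQuantumMatrix q⁻¹ (t.submatrix f g) where
  col j h := by simp [ht.col (g j) (hf h), smul_smul]
  row i _ _ h := by simp [ht.row (f i) (hg h), smul_smul]
  comm h h' := by simp only [Matrix.submatrix_apply, ht.comm (hf h) (hg h')]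
  serp h h' := by
    simp only [Matrix.submatrix_apply, ht.serp (hf h) (hg h'), ht.comm (hf h) (hg h'), inv_inv]
    module

end Reversal

section Lexicographic

variable {K A : Type*} {N m n : ℕ}

theorem finProdFinEquiv_lt_finProdFinEquiv {a b : Fin m × Fin n} :
    finProdFinEquiv a < finProdFinEquiv b ↔ toLex a < toLex b := by
  obtain ⟨i, j⟩ := a
  obtain ⟨k, l⟩ := b
  rw [Prod.Lex.toLex_lt_toLex, Fin.lt_def, finProdFinEquiv_apply_val, finProdFinEquiv_apply_val]
  rcases lt_trichotomy i k with hik | rfl | hki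
  · have : n * (i + 1) ≤ n * k := Nat.mul_le_mul_left n hik
    simp only [hik, true_or, iff_true]
    lia
  · simp
  · have : n * (k + 1) ≤ n * i := Nat.mul_le_mul_left n hki
    simp only [hki.not_gt, hki.ne', false_and, or_self, iff_false]
    lia

theorem finProdFinEquiv_rev (a : Fin m × Fin n) :
    finProdFinEquiv (a.1.rev, a.2.rev) = (finProdFinEquiv a).rev := by
  obtain ⟨i, j⟩ := a
  ext
  have hi : m - (i + 1) + (i + 1) = m := Nat.sub_add_cancel i.isLt
  have hmn : m * n = n * (m - (i + 1)) + n * i + n := by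
    conv_lhs => rw [← hi]
    ring
  have hj := j.isLt
  simp only [finProdFinEquiv_apply_val, Fin.val_rev]
  omega

theorem lexEntries_finProdFinEquiv (t : Fin m → Fin n → A) (i : Fin m) (j : Fin n) :
    lexEntries t (finProdFinEquiv (i, j)) = t i j := by
  rw [lexEntries, Equiv.symm_apply_apply]

theorem lexEntries_comp_rev (t : Matrix (Fin m) (Fin n) A) :
    lexEntries t ∘ Fin.rev = lexEntries (t.submatrix Fin.rev Fin.rev) := by
  funext l
  obtain ⟨a, rfl⟩ := finProdFinEquiv.surjective l
  simp [lexEntries, ← finProdFinEquiv_rev]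

variable [Field K] [Ring A] [Algebra K A]

theorem revOrdMonomial_eq_ordMonomial_comp_rev (x : Fin N → A) (e : Fin N → ℕ) :
    revOrdMonomial x e = ordMonomial (x ∘ Fin.rev) (e ∘ Fin.rev) := by
  simp [revOrdMonomial, ordMonomial, List.finRange_reverse, Function.comp_def]

theorem RsubRev_eq_Rsub_comp_rev (x : Fin N → A) (k : Fin N) :
    RsubRev K x k = Rsub K (x ∘ Fin.rev) k.rev := by
  rw [RsubRev, Rsub, Set.image_comp]
  congr 2
  ext l
  constructor
  · intro hl
    exact ⟨l.rev, Fin.rev_lt_rev.2 hl, l.rev_rev⟩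
  · rintro ⟨l, hl, rfl⟩
    exact Fin.lt_rev_iff.1 hl

theorem Rsub_lexEntries (t : Matrix (Fin m) (Fin n) A) (k : Fin (m * n)) :
    Rsub K (lexEntries t) k = Algebra.adjoin K (entriesBefore t (finProdFinEquiv.symm k)) := by
  have hset : {b | toLex b < toLex (finProdFinEquiv.symm k)} =
      finProdFinEquiv.symm '' {l | (l : ℕ) < k} := by
    ext b
    rw [Equiv.image_symm_eq_preimage, Set.mem_ofPred, ← finProdFinEquiv_lt_finProdFinEquiv,
      Equiv.apply_symm_apply]
    rfl
  rw [Rsub, entriesBefore, hset, Set.image_image]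
  rfl

theorem RsubRev_lexEntries (t : Matrix (Fin m) (Fin n) A) (k : Fin (m * n)) :
    RsubRev K (lexEntries t) k = Rsub K (lexEntries (t.submatrix Fin.rev Fin.rev)) k.rev := by
  rw [RsubRev_eq_Rsub_comp_rev, lexEntries_comp_rev]

end Lexicographic

section LexicographicCommutator

variable {K A : Type*} [Field K] [Ring A] [Algebra K A] {m n : ℕ} {q : Kˣ}
  {t : Matrix (Fin m) (Fin n) A} {σ : A →ₐ[K] A} {k : Fin (m * n)} {x : A}

theorem IsQuantumMatrix.skewCommutator_mem_Rsub (ht : IsQuantumMatrix q t)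
    (hσ : ∀ b, σ (t b.1 b.2) = quantumWeight q (finProdFinEquiv.symm k) b • t b.1 b.2)
    (hx : x ∈ Rsub K (lexEntries t) k) :
    skewCommutator σ (lexEntries t k) x ∈ Rsub K (lexEntries t) k := by
  rw [Rsub_lexEntries] at hx ⊢
  exact ht.skewCommutator_mem_adjoin hσ hx

theorem IsQuantumMatrix.exists_skewCommutator_pow_eq_zero_of_mem_Rsub (ht : IsQuantumMatrix q t)
    (hσ : ∀ b, σ (t b.1 b.2) = quantumWeight q (finProdFinEquiv.symm k) b • t b.1 b.2)
    (hx : x ∈ Rsub K (lexEntries t) k) :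
    ∃ p : ℕ, (skewCommutator σ (lexEntries t k) ^ p) x = 0 := by
  rw [Rsub_lexEntries] at hx
  exact ht.exists_skewCommutator_pow_eq_zero hσ hx

theorem map_submatrix_rev_eq_quantumWeight_smul
    (hσ : ∀ b, σ (t b.1 b.2) = (quantumWeight q (finProdFinEquiv.symm k) b)⁻¹ • t b.1 b.2)
    (b : Fin m × Fin n) :
    σ (t.submatrix Fin.rev Fin.rev b.1 b.2) =
      quantumWeight q⁻¹ (finProdFinEquiv.symm k.rev) b • t.submatrix Fin.rev Fin.rev b.1 b.2 := by
  obtain ⟨a, rfl⟩ := finProdFinEquiv.surjective k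
  simp only [Matrix.submatrix_apply, hσ (b.1.rev, b.2.rev), ← finProdFinEquiv_rev,
    Equiv.symm_apply_apply, quantumWeight, Fin.rev_eq_iff, mul_inv, apply_ite Inv.inv, inv_one]

theorem IsQuantumMatrix.skewCommutator_mem_RsubRev (ht : IsQuantumMatrix q t)
    (hσ : ∀ b, σ (t b.1 b.2) = (quantumWeight q (finProdFinEquiv.symm k) b)⁻¹ • t b.1 b.2)
    (hx : x ∈ RsubRev K (lexEntries t) k) :
    skewCommutator σ (lexEntries t k) x ∈ RsubRev K (lexEntries t) k := by
  rw [RsubRev_lexEntries] at hx ⊢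
  have hk : lexEntries t k = lexEntries (t.submatrix Fin.rev Fin.rev) k.rev := by
    rw [← lexEntries_comp_rev, Function.comp_apply, Fin.rev_rev]
  rw [hk]
  exact (ht.submatrix_of_strictAnti Fin.rev_strictAnti Fin.rev_strictAnti).skewCommutator_mem_Rsub
    (map_submatrix_rev_eq_quantumWeight_smul hσ) hx

theorem IsQuantumMatrix.exists_skewCommutator_pow_eq_zero_of_mem_RsubRev
    (ht : IsQuantumMatrix q t)
    (hσ : ∀ b, σ (t b.1 b.2) = (quantumWeight q (finProdFinEquiv.symm k) b)⁻¹ • t b.1 b.2)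
    (hx : x ∈ RsubRev K (lexEntries t) k) :
    ∃ p : ℕ, (skewCommutator σ (lexEntries t k) ^ p) x = 0 := by
  rw [RsubRev_lexEntries] at hx
  have hk : lexEntries t k = lexEntries (t.submatrix Fin.rev Fin.rev) k.rev := by
    rw [← lexEntries_comp_rev, Function.comp_apply, Fin.rev_rev]
  rw [hk]
  exact (ht.submatrix_of_strictAnti Fin.rev_strictAnti Fin.rev_strictAnti)
    |>.exists_skewCommutator_pow_eq_zero_of_mem_Rsub
      (map_submatrix_rev_eq_quantumWeight_smul hσ) hx

end LexicographicCommutator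

section ReversePBW

variable {K : Type*} [Field K] {q : Kˣ} {m n : ℕ}

theorem linearIndependent_revOrdMonomial_lexEntries_tGen :
    LinearIndependent K (revOrdMonomial (lexEntries (tGen K q m n))) := by
  have htGen : IsQuantumMatrix q⁻¹ (.of (tGen K q⁻¹ m n)) := isQuantumMatrix_tGen
  have hrev : IsQuantumMatrix q ((Matrix.of (tGen K q⁻¹ m n)).submatrix Fin.rev Fin.rev) := by
    simpa only [inv_inv] using htGen.submatrix_of_strictAnti Fin.rev_strictAnti Fin.rev_strictAnti
  have hlift (e : Fin (m * n) → ℕ) :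
      hrev.lift (revOrdMonomial (lexEntries (tGen K q m n)) e) =
        ordMonomial (lexEntries (tGen K q⁻¹ m n)) (e ∘ Fin.rev) := by
    have hgen (k : Fin (m * n)) :
        hrev.lift ((lexEntries (tGen K q m n) ∘ Fin.rev) k) = lexEntries (tGen K q⁻¹ m n) k := by
      obtain ⟨a, rfl⟩ := finProdFinEquiv.surjective k
      simp [lexEntries, ← finProdFinEquiv_rev]
    simp only [revOrdMonomial_eq_ordMonomial_comp_rev, map_ordMonomial, hgen]
  refine .of_comp hrev.lift.toLinearMap ?_
  have hcomp := (linearIndependent_ordMonomial_lexEntries_tGen (q := q⁻¹)).comp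
    (fun e : Fin (m * n) → ℕ => e ∘ Fin.rev) Fin.rev_surjective.injective_comp_right
  exact (funext hlift : hrev.lift ∘ revOrdMonomial (lexEntries (tGen K q m n)) = _) ▸ hcomp

end ReversePBW

section Eigenvectors

variable {K R : Type*} [Field K] [Ring R] [Algebra K R] {r : ℕ} {act : Torus K r →* (R ≃ₐ[K] R)}

/-- The eigenvectors of a torus action with a given character. -/
def eigenSubmodule (act : Torus K r →* (R ≃ₐ[K] R)) (f : Fin r → ℤ) : Submodule K R where
  carrier := {a | IsEigenWith K act f a}
  add_mem' ha hb ξ := by rw [map_add, ha ξ, hb ξ, smul_add]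
  zero_mem' ξ := by rw [map_zero, smul_zero]
  smul_mem' c a ha ξ := by rw [map_smul, ha ξ, smul_comm]

theorem eigenSubmodule_mul_le (f g : Fin r → ℤ) :
    eigenSubmodule act f * eigenSubmodule act g ≤ eigenSubmodule act (f + g) := by
  refine Submodule.mul_le.2 fun a ha b hb ξ => ?_
  simp only [map_mul, ha ξ, hb ξ, smul_mul_smul_comm, ← Units.val_mul, Pi.add_apply, zpow_add,
    Finset.prod_mul_distrib]

theorem iSup_eigenSubmodule_eq_top {S : Set R} (hS : Algebra.adjoin K S = ⊤)
    (h : ∀ s ∈ S, ∃ f, IsEigenWith K act f s) : ⨆ f, eigenSubmodule act f = ⊤ := by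
  have hmul : (⨆ f, eigenSubmodule act f) * (⨆ f, eigenSubmodule act f) ≤
      ⨆ f, eigenSubmodule act f := by
    simp only [Submodule.iSup_mul, Submodule.mul_iSup, iSup_le_iff]
    exact fun f g => (eigenSubmodule_mul_le g f).trans (le_iSup (eigenSubmodule act) (g + f))
  refine eq_top_iff.2 fun a _ => ?_
  have ha : a ∈ Algebra.adjoin K S := hS ▸ Algebra.mem_top
  induction ha using Algebra.adjoin_induction with
  | mem s hs => exact (h s hs).elim fun f hf => Submodule.mem_iSup_of_mem f hf
  | algebraMap c =>
    have hc : IsEigenWith K act 0 (algebraMap K R c) := fun ξ => by simp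
    exact Submodule.mem_iSup_of_mem 0 hc
  | add a b _ _ iha ihb => exact add_mem (iha trivial) (ihb trivial)
  | mul a b _ _ iha ihb => exact hmul (Submodule.mul_mem_mul (iha trivial) (ihb trivial))

theorem isRationalAction_of_adjoin_eq_top {S : Set R} (hS : Algebra.adjoin K S = ⊤)
    (h : ∀ s ∈ S, ∃ f, IsEigenWith K act f s) : IsRationalAction K act := fun a => by
  have ha : a ∈ ⨆ f, eigenSubmodule act f := iSup_eigenSubmodule_eq_top hS h ▸ Submodule.mem_top
  obtain ⟨c, hc, hsum⟩ := (Submodule.mem_iSup_iff_exists_finsupp _ a).1 ha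
  exact ⟨c.support, c, hsum.symm, fun f _ => hc f⟩

end Eigenvectors

section TorusAction

theorem IsQuantumMatrix.rescale {K A I J : Type*} [CommRing K] [Ring A] [Algebra K A]
    [LinearOrder I] [LinearOrder J] {q : Kˣ} {t : Matrix I J A} (ht : IsQuantumMatrix q t)
    (c : I → K) (d : J → K) : IsQuantumMatrix q (.of fun i j => (c i * d j) • t i j) where
  col j h := by
    simp only [Matrix.of_apply, smul_mul_smul_comm, ht.col j h]
    module
  row i _ _ h := by
    simp only [Matrix.of_apply, smul_mul_smul_comm, ht.row i h]
    module
  comm h h' := by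
    simp only [Matrix.of_apply, smul_mul_smul_comm, ht.comm h h']
    module
  serp h h' := by
    simp only [Matrix.of_apply, smul_mul_smul_comm, ht.serp h h']
    module

variable {K : Type*} [Field K] {q : Kˣ} {m n : ℕ}

/-- The character `ξ ↦ ξ_i ξ_{m+j}⁻¹` of the torus, by which it acts on `t_{ij}`. -/
def torusWeight (a : Fin m × Fin n) : Torus K (m + n) →* Kˣ :=
  Pi.evalMonoidHom (fun _ => Kˣ) (Fin.castAdd n a.1) /
    Pi.evalMonoidHom (fun _ => Kˣ) (Fin.natAdd m a.2)

theorem torusWeight_apply (a : Fin m × Fin n) (ξ : Torus K (m + n)) :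
    torusWeight a ξ = ξ (Fin.castAdd n a.1) * (ξ (Fin.natAdd m a.2))⁻¹ :=
  div_eq_mul_inv _ _

theorem torusWeight_eq_prod (a : Fin m × Fin n) (ξ : Torus K (m + n)) :
    torusWeight a ξ = ∏ s, ξ s ^ (Fin.addCases (Pi.single a.1 1) (Pi.single a.2 (-1)) s : ℤ) := by
  simp [torusWeight_apply, Fin.prod_univ_add, Pi.single_apply, apply_ite]

theorem torusWeight_hMat (a b : Fin m × Fin n) :
    torusWeight b (hMat K q m n a.1 a.2) = quantumWeight q a b := by
  have hne (i : Fin m) (j : Fin n) : Fin.natAdd m j ≠ Fin.castAdd n i := by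
    rw [Ne, Fin.ext_iff, Fin.val_natAdd, Fin.val_castAdd]
    omega
  simp only [torusWeight_apply, hMat, quantumWeight, hne, (hne _ _).symm, Fin.castAdd_inj,
    Fin.natAdd_inj, if_false, apply_ite Inv.inv, inv_one]

/-- The torus acts on `R_q[M_{m×n}]` by rescaling the rows and columns of the generic matrix. -/
def torusEnd (ξ : Torus K (m + n)) : RqMat K q m n →ₐ[K] RqMat K q m n :=
  (isQuantumMatrix_tGen.rescale (fun i => (ξ (Fin.castAdd n i) : K))
    fun j => (((ξ (Fin.natAdd m j))⁻¹ : Kˣ) : K)).lift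

theorem torusEnd_tGen (ξ : Torus K (m + n)) (i : Fin m) (j : Fin n) :
    torusEnd ξ (tGen K q m n i j) = torusWeight (i, j) ξ • tGen K q m n i j := by
  rw [torusEnd, IsQuantumMatrix.lift_tGen, Matrix.of_apply, torusWeight_apply, Units.smul_def,
    Units.val_mul]

variable (K q m n) in
/-- The action of the torus on `R_q[M_{m×n}]` by automorphisms; these are invertible because
`torusEnd` is multiplicative in `ξ`. -/
def torusAction : Torus K (m + n) →* (RqMat K q m n ≃ₐ[K] RqMat K q m n) :=
  (AlgEquiv.algHomUnitsEquiv K _).toMonoidHom.comp <| MonoidHom.toHomUnits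
    { toFun := torusEnd
      map_one' := RqMat_hom_ext fun i j => by
        rw [torusEnd_tGen, map_one, one_smul, AlgHom.one_apply]
      map_mul' ξ η := RqMat_hom_ext fun i j => by
        rw [AlgHom.mul_apply, torusEnd_tGen, torusEnd_tGen, map_mul, Units.smul_def,
          Units.smul_def, map_smul, torusEnd_tGen, Units.smul_def, smul_smul, mul_comm,
          Units.val_mul] }

theorem torusAction_tGen (ξ : Torus K (m + n)) (a : Fin m × Fin n) :
    torusAction K q m n ξ (tGen K q m n a.1 a.2) = torusWeight a ξ • tGen K q m n a.1 a.2 :=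
  torusEnd_tGen ξ a.1 a.2

theorem exists_isEigenWith_tGen (a : Fin m × Fin n) :
    ∃ f, IsEigenWith K (torusAction K q m n) f (tGen K q m n a.1 a.2) :=
  ⟨_, fun ξ => by rw [torusAction_tGen, torusWeight_eq_prod, Units.smul_def]⟩

end TorusAction

section SymQNA

theorem skewDelta_iterate_eq_skewCommutator_pow {K R : Type*} [Field K] [Ring R] [Algebra K R]
    {r N : ℕ} (act : Torus K r →* (R ≃ₐ[K] R)) (x : Fin N → R) (h : Fin N → Torus K r) (k : Fin N)
    (p : ℕ) (a : R) : (skewDelta K act x h k)^[p] a =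
      (skewCommutator (act (h k) : R →ₐ[K] R) (x k) ^ p) a := by
  rw [Module.End.pow_apply]
  rfl

variable {K : Type*} [Field K] {q : Kˣ} {m n : ℕ}

theorem quantumWeight_self {I J : Type*} [LinearOrder I] [LinearOrder J] (a : I × J) :
    quantumWeight q a a = q ^ (-2 : ℤ) := by
  rw [quantumWeight, if_pos rfl, if_pos rfl, zpow_neg, zpow_ofNat, pow_two, mul_inv]

theorem torusAction_hMat (a b : Fin m × Fin n) :
    torusAction K q m n (hMat K q m n a.1 a.2) (tGen K q m n b.1 b.2) =
      quantumWeight q a b • tGen K q m n b.1 b.2 := by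
  rw [torusAction_tGen, torusWeight_hMat]

theorem torusAction_inv_hMat (a b : Fin m × Fin n) :
    torusAction K q m n (hMat K q m n a.1 a.2)⁻¹ (tGen K q m n b.1 b.2) =
      (quantumWeight q a b)⁻¹ • tGen K q m n b.1 b.2 := by
  rw [torusAction_tGen, map_inv, torusWeight_hMat]

theorem adjoin_range_lexEntries_tGen :
    Algebra.adjoin K (Set.range (lexEntries (tGen K q m n))) = ⊤ := by
  rw [← adjoin_range_tGen, ← finProdFinEquiv.symm.surjective.range_comp]
  rfl

theorem exists_isEigenWith_lexEntries_tGen (k : Fin (m * n)) :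
    ∃ f, IsEigenWith K (torusAction K q m n) f (lexEntries (tGen K q m n) k) :=
  exists_isEigenWith_tGen _

/-- `R_q[M_{m×n}]` as a symmetric quantum nilpotent algebra. -/
def quantumMatrixSymQNA (hq : ∀ s : ℕ, s ≠ 0 → (q : K) ^ s ≠ 1) :
    SymQNA K (RqMat K q m n) (m * n) (m + n) where
  x := lexEntries (tGen K q m n)
  act := torusAction K q m n
  h := lexEntries (hMat K q m n)
  lam _ := ((q ^ (-2 : ℤ) : Kˣ) : K)
  rational := isRationalAction_of_adjoin_eq_top adjoin_range_lexEntries_tGen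
    (Set.forall_mem_range.2 exists_isEigenWith_lexEntries_tGen)
  gen := adjoin_range_lexEntries_tGen
  pbw := linearIndependent_ordMonomial_lexEntries_tGen
  eigenvec := exists_isEigenWith_lexEntries_tGen
  stable _ _ ha := isQuantumMatrix_tGen.skewCommutator_mem_Rsub (torusAction_hMat _) ha
  locnil k a ha := by
    simp only [skewDelta_iterate_eq_skewCommutator_pow]
    exact isQuantumMatrix_tGen.exists_skewCommutator_pow_eq_zero_of_mem_Rsub
      (torusAction_hMat _) ha
  hx k := (torusAction_hMat _ _).trans (by rw [quantumWeight_self, Units.smul_def, lexEntries])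
  lam_not_root _ s hs h := hq (2 * s) (by omega) (by simpa [pow_mul] using h)
  hstar k := (lexEntries (hMat K q m n) k)⁻¹
  lamstar _ := (q : K) ^ 2
  pbwRev := linearIndependent_revOrdMonomial_lexEntries_tGen
  stableRev _ _ ha := isQuantumMatrix_tGen.skewCommutator_mem_RsubRev (torusAction_inv_hMat _) ha
  locnilRev k a ha := by
    simp only [skewDelta_iterate_eq_skewCommutator_pow]
    exact isQuantumMatrix_tGen.exists_skewCommutator_pow_eq_zero_of_mem_RsubRev
      (torusAction_inv_hMat _) ha
  hxstar k := (torusAction_inv_hMat _ _).trans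
    (by rw [quantumWeight_self, Units.smul_def, lexEntries, zpow_neg, inv_inv]; rfl)
  lamstar_not_root _ s hs := by
    rw [← pow_mul]
    exact hq (2 * s) (by omega)

end SymQNA

/-- **Quantum matrices are symmetric quantum nilpotent algebras.**
For `q ∈ Kˣ` not a root of unity, the algebra `R_q[M_{m×n}]` of quantum matrices is a
symmetric quantum nilpotent algebra of dimension `N = mn` with respect to the presentation
`x_{(i-1)n+j} = t_{ij}` and the rational action of the torus `H = (Kˣ)^{m+n}` given by
`(ξ_1, …, ξ_{m+n}) · t_{ij} = ξ_i ξ_{m+j}⁻¹ t_{ij}` (in particular each `δ_k` is locally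
nilpotent), with the elements `h_{ij} = (1,…,1,q⁻¹,1,…,1,q,1,…,1)` satisfying
`σ_{(i-1)n+j} = (h_{ij} ·)` and `h_{ij} · t_{ij} = q⁻² t_{ij}`. -/
theorem quantum_matrices_symQNA
    {K : Type u} [Field K] (q : Kˣ) (hq : ∀ s : ℕ, s ≠ 0 → (q : K) ^ s ≠ 1)
    (m n : ℕ) (hm : 0 < m) (hn : 0 < n) :
    ∃ act : Torus K (m + n) →* (RqMat K q m n ≃ₐ[K] RqMat K q m n),
      (∀ (ξ : Torus K (m + n)) (i : Fin m) (j : Fin n),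
        act ξ (tGen K q m n i j) =
          ((ξ (Fin.castAdd n i) * (ξ (Fin.natAdd m j))⁻¹ : Kˣ) : K) • tGen K q m n i j) ∧
      ∃ S : SymQNA K (RqMat K q m n) (m * n) (m + n),
        S.act = act ∧
        (∀ (i : Fin m) (j : Fin n), S.x (finProdFinEquiv (i, j)) = tGen K q m n i j) ∧
        (∀ (i : Fin m) (j : Fin n), S.h (finProdFinEquiv (i, j)) = hMat K q m n i j) ∧
        (∀ (i : Fin m) (j : Fin n),
          act (hMat K q m n i j) (tGen K q m n i j) =
            ((q ^ (-2 : ℤ) : Kˣ) : K) • tGen K q m n i j) := by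
  refine ⟨torusAction K q m n, fun ξ i j => ?_, quantumMatrixSymQNA hq, rfl, fun i j => ?_,
    fun i j => ?_, fun i j => ?_⟩
  · rw [torusAction_tGen ξ (i, j), torusWeight_apply, Units.smul_def]
  · exact lexEntries_finProdFinEquiv (tGen K q m n) i j
  · exact lexEntries_finProdFinEquiv (hMat K q m n) i j
  · rw [torusAction_hMat (i, j) (i, j), quantumWeight_self, Units.smul_def]
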